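/- Let G be a connected simple graph on n vertices in which every vertex has odd degree except possibly one. Then pn(G) ≤ ⌊n/2⌋. -/

import Mathlib

open SimpleGraph

variable {V : Type*}

/-- A path decomposition of a simple graph `G`: a list of nontrivial paths of `G`
that are pairwise edge-disjoint and together cover every edge of `G`. -/
structure PathDecomp (G : SimpleGraph V) where
  paths : List (Σ a b : V, G.Walk a b)
  nontrivial : ∀ p ∈ paths, 0 < p.2.2.length
  isPath : ∀ p ∈ paths, p.2.2.IsPath
  edgeDisjoint : paths.Pairwise fun p q => ∀ e, e ∈ p.2.2.edges → e ∉ q.2.2.edges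
  covers : ∀ e ∈ G.edgeSet, ∃ p ∈ paths, e ∈ p.2.2.edges

/-- Cardinality of a path decomposition. -/
def pdCard {G : SimpleGraph V} (D : PathDecomp G) : ℕ := D.paths.length

/-- `ends D u` is the number of paths in `D` having `u` as an end vertex. -/
def ends [DecidableEq V] {G : SimpleGraph V} (D : PathDecomp G) (u : V) : ℕ :=
  (D.paths.filter fun p => p.1 = u ∨ p.2.1 = u).length

/-- The path number: minimum cardinality of a path decomposition. -/
noncomputable def pn (G : SimpleGraph V) : ℕ :=
  sInf {n | ∃ D : PathDecomp G, pdCard D = n}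

/-- Degree as the `ncard` of the neighbor set (no decidability needed). -/
noncomputable def ndeg (G : SimpleGraph V) (v : V) : ℕ := {w | G.Adj v w}.ncard

/-- A SET graph: the set of even-degree vertices consists of exactly three
mutually adjacent vertices, and every odd-degree vertex has at least two
even-degree neighbors. -/
def IsSETGraph (G : SimpleGraph V) : Prop :=
  (∃ a b c : V, a ≠ b ∧ a ≠ c ∧ b ≠ c ∧
      {v : V | Even (ndeg G v)} = {a, b, c} ∧
      G.Adj a b ∧ G.Adj a c ∧ G.Adj b c) ∧
  ∀ v : V, Odd (ndeg G v) →
    ∃ w₁ w₂ : V, w₁ ≠ w₂ ∧ G.Adj v w₁ ∧ G.Adj v w₂ ∧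
      Even (ndeg G w₁) ∧ Even (ndeg G w₂)

/-!
A stronger assertion goes through by induction on the number of edges: the edges of a finite graph
decompose into paths, trivial ones allowed, with any prescribed multiset of ends that has the
parities of the degrees and misses at most one non-isolated vertex. Since a path has two ends,
prescribing each odd vertex once gives the bound.

For the induction step remove an edge `ab` and decompose the rest so that `b` and all the remaining
neighbours of `a` are ends. To put `ab` back, look at a path from `b`. If it avoids `a`, prolong it
by `ab`. Otherwise it is `b … y a …`, and rerouting it as `y … b a …` trades the edge `ay` for `ab`;
now `ay` has to be put back, using a path that had `y` as an end before the rerouting. Different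
ends lead to `a` by different edges, none of them `ab`, so no neighbour of `a` comes up twice and
the process stops.
-/

section ListPaths

/-- The edges joining consecutive entries of a list of vertices. -/
def listEdges (l : List V) : Multiset (Sym2 V) := List.zipWith (s(·, ·)) l l.tail

/-- The first and the last entry of a list, so that the only entry of a singleton counts twice. -/
def listEnds (l : List V) : Multiset V :=
  (l.head?.toList : Multiset V) + (l.getLast?.toList : Multiset V)

@[simp]
theorem listEdges_singleton (x : V) : listEdges [x] = 0 := rfl

@[simp]
theorem listEdges_cons_cons (x y : V) (l : List V) :
    listEdges (x :: y :: l) = s(x, y) ::ₘ listEdges (y :: l) := rfl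

theorem listEdges_append_cons {p : List V} {x : V} (hx : p.getLast? = some x) (y : V)
    (r : List V) :
    listEdges (p ++ y :: r) = s(x, y) ::ₘ (listEdges p + listEdges (y :: r)) := by
  induction p with
  | nil => simp at hx
  | cons z p ih =>
    cases p with
    | nil =>
      obtain rfl : z = x := by simpa using hx
      simp
    | cons w p =>
      rw [List.getLast?_cons_cons] at hx
      have ih := ih hx
      simp only [List.cons_append, listEdges_cons_cons] at ih ⊢
      rw [ih, Multiset.cons_add, Multiset.cons_swap]

@[simp]
theorem listEdges_reverse (l : List V) : listEdges l.reverse = listEdges l := by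
  induction l with
  | nil => rfl
  | cons x l ih =>
    cases l with
    | nil => rfl
    | cons y l =>
      rw [List.reverse_cons, listEdges_append_cons (x := y) (by simp), ih, Sym2.eq_swap]
      simp

theorem mem_listEdges_of_infix {x y : V} {l : List V} (h : [x, y] <:+: l) :
    s(x, y) ∈ listEdges l := by
  obtain ⟨s, t, rfl⟩ := h
  have hsplit : s ++ [x, y] ++ t = (s ++ [x]) ++ y :: t := by simp
  rw [hsplit, listEdges_append_cons (x := x) (by simp)]
  exact Multiset.mem_cons_self _ _

@[simp]
theorem listEnds_reverse (l : List V) : listEnds l.reverse = listEnds l := by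
  simp [listEnds, add_comm]

theorem listEnds_cons (x : V) (l : List V) :
    listEnds (x :: l) = x ::ₘ ((x :: l).getLast?.toList : Multiset V) := by
  simp [listEnds]

theorem listEnds_append_cons {p : List V} {x : V} (hx : p.head? = some x) (y : V) (r : List V) :
    listEnds (p ++ y :: r) = x ::ₘ ((y :: r).getLast?.toList : Multiset V) := by
  obtain ⟨p, rfl⟩ := List.head?_eq_some_iff.1 hx
  rw [List.cons_append, listEnds_cons, ← List.cons_append,
    List.getLast?_append_of_ne_nil _ (List.cons_ne_nil y r)]

theorem mem_listEnds {l : List V} {v : V} :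
    v ∈ listEnds l ↔ l.head? = some v ∨ l.reverse.head? = some v := by
  simp [listEnds]

theorem card_listEnds {l : List V} (h : l ≠ []) : (listEnds l).card = 2 := by
  simp [listEnds, List.head?_eq_some_head h, List.getLast?_eq_some_getLast h]

theorem pair_infix_append_cons_iff {p r : List V} {a y : V} (h : (p ++ a :: r).Nodup) :
    [y, a] <:+: p ++ a :: r ↔ p.getLast? = some y := by
  have ha : a ∉ p ++ r := (List.nodup_cons.1 (List.nodup_middle.1 h)).1
  rw [List.mem_append, not_or] at ha
  rw [List.getLast?_eq_some_iff]
  constructor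
  · rintro ⟨s, t, hst⟩
    have hst : p ++ a :: r = (s ++ [y]) ++ a :: t := by simp [← hst]
    exact ⟨s, ((List.append_cons_inj_of_notMem ha.1 ha.2).1 hst).1⟩
  · rintro ⟨s, rfl⟩
    exact ⟨s, r, by simp⟩

end ListPaths

/-- `D` is a multiset of paths, given by their lists of vertices, whose edges form the multiset `E`
and whose ends form the multiset `C`. Trivial paths are allowed and have two equal ends. -/
structure IsPathDecomp (E : Multiset (Sym2 V)) (C : Multiset V) (D : Multiset (List V)) : Prop where
  nodup : ∀ l ∈ D, l.Nodup
  edges : D.bind listEdges = E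
  ends : D.bind listEnds = C

/-- `l` is a member of `D`, up to reversal. -/
def Traverses (D : Multiset (List V)) (l : List V) : Prop := l ∈ D ∨ l.reverse ∈ D

/-- Some path of `D`, traversed from its end `v`, avoids `a` or enters it from a vertex of `N`. A
path that starts at `a` counts as never entering `a`. -/
def EntersVia (D : Multiset (List V)) (a : V) (N : Finset V) (v : V) : Prop :=
  ∃ l, Traverses D l ∧ l.head? = some v ∧ ∀ y, [y, a] <:+: l → y ∈ N

theorem traverses_cons {l m : List V} {D : Multiset (List V)} :
    Traverses (l ::ₘ D) m ↔ m = l ∨ m.reverse = l ∨ Traverses D m := by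
  simp only [Traverses, Multiset.mem_cons]
  tauto

theorem traverses_cons_reverse {l m : List V} {D : Multiset (List V)} :
    Traverses (l.reverse ::ₘ D) m ↔ Traverses (l ::ₘ D) m := by
  rw [traverses_cons, traverses_cons, List.reverse_inj, ← List.reverse_eq_iff]
  tauto

namespace IsPathDecomp

variable {E : Multiset (Sym2 V)} {C : Multiset V} {D : Multiset (List V)}

theorem cons_reverse {l : List V} (h : IsPathDecomp E C (l.reverse ::ₘ D)) :
    IsPathDecomp E C (l ::ₘ D) where
  nodup := by simpa using h.nodup
  edges := by simpa using h.edges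
  ends := by simpa using h.ends

theorem exists_cons_of_traverses (h : IsPathDecomp E C D) {l : List V} (hl : Traverses D l) :
    ∃ D', IsPathDecomp E C (l ::ₘ D') ∧ ∀ m, Traverses D m ↔ Traverses (l ::ₘ D') m := by
  rcases hl with hl | hl <;> obtain ⟨D', rfl⟩ := Multiset.exists_cons_of_mem hl
  · exact ⟨D', h, fun _ => Iff.rfl⟩
  · exact ⟨D', h.cons_reverse, fun _ => traverses_cons_reverse⟩

theorem mem_edges (h : IsPathDecomp E C D) {l : List V} (hl : Traverses D l) {e : Sym2 V}
    (he : e ∈ listEdges l) : e ∈ E := by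
  rw [← h.edges, Multiset.mem_bind]
  exact hl.elim (fun hl => ⟨l, hl, he⟩) fun hl => ⟨l.reverse, hl, by rwa [listEdges_reverse]⟩

theorem exists_traverses_of_mem_ends (h : IsPathDecomp E C D) {v : V} (hv : v ∈ C) :
    ∃ l, Traverses D l ∧ l.head? = some v := by
  rw [← h.ends, Multiset.mem_bind] at hv
  obtain ⟨l, hl, hv⟩ := hv
  rcases mem_listEnds.1 hv with hv | hv
  · exact ⟨l, Or.inl hl, hv⟩
  · exact ⟨l.reverse, Or.inr (by rwa [List.reverse_reverse]), hv⟩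

theorem disjoint_listEdges_of_traverses {l m : List V} (h : IsPathDecomp E C (l ::ₘ D))
    (hE : E.Nodup) (hm : Traverses D m) : Disjoint (listEdges l) (listEdges m) := by
  rw [← h.edges, Multiset.cons_bind, Multiset.nodup_add] at hE
  refine Multiset.disjoint_left.2 fun hel hem => Multiset.disjoint_left.1 hE.2.2 hel ?_
  exact mem_edges ⟨fun l hl => h.nodup l (Multiset.mem_cons_of_mem hl), rfl, rfl⟩ hm hem

theorem prolong {a b : V} {l : List V} (h : IsPathDecomp E (b ::ₘ C) (l ::ₘ D))
    (hb : l.head? = some b) (ha : a ∉ l) :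
    IsPathDecomp (s(b, a) ::ₘ E) (a ::ₘ C) ((a :: l) ::ₘ D) := by
  obtain ⟨l, rfl⟩ := List.head?_eq_some_iff.1 hb
  refine ⟨?_, ?_, ?_⟩
  · have hnodup := h.nodup
    simp only [Multiset.forall_mem_cons] at hnodup ⊢
    exact ⟨hnodup.1.cons ha, hnodup.2⟩
  · rw [← h.edges, Multiset.cons_bind, Multiset.cons_bind, listEdges_cons_cons,
      Sym2.eq_swap, Multiset.cons_add]
  · have hends := h.ends
    rw [Multiset.cons_bind, listEnds_cons, Multiset.cons_add, Multiset.cons_inj_right] at hends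
    rw [Multiset.cons_bind, listEnds_cons, List.getLast?_cons_cons, Multiset.cons_add, hends]

theorem reroute {a b y : V} {p t : List V} (hb : p.head? = some b) (hy : p.getLast? = some y)
    (h : IsPathDecomp (s(y, a) ::ₘ E) (b ::ₘ C) ((p ++ a :: t) ::ₘ D)) :
    IsPathDecomp (s(b, a) ::ₘ E) (y ::ₘ C) ((p.reverse ++ a :: t) ::ₘ D) := by
  have hb' : p.reverse.getLast? = some b := by rwa [List.getLast?_reverse]
  have hy' : p.reverse.head? = some y := by rwa [List.head?_reverse]
  refine ⟨?_, ?_, ?_⟩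
  · have hnodup := h.nodup
    simp only [Multiset.forall_mem_cons] at hnodup ⊢
    exact ⟨((List.reverse_perm p).append_right _).nodup_iff.2 hnodup.1, hnodup.2⟩
  · have hedges := h.edges
    rw [Multiset.cons_bind, listEdges_append_cons hy, Multiset.cons_add,
      Multiset.cons_inj_right] at hedges
    rw [Multiset.cons_bind, listEdges_append_cons hb', Multiset.cons_add, listEdges_reverse,
      hedges]
  · have hends := h.ends
    rw [Multiset.cons_bind, listEnds_append_cons hb, Multiset.cons_add,
      Multiset.cons_inj_right] at hends
    rw [Multiset.cons_bind, listEnds_append_cons hy', Multiset.cons_add, hends]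

theorem entersVia_reroute [DecidableEq V] {a y v : V} {p t : List V} {N : Finset V}
    (h : IsPathDecomp E C ((p ++ a :: t) ::ₘ D)) (hE : E.Nodup) (hy : p.getLast? = some y)
    (hv : p.head? ≠ some v) (hN : EntersVia ((p ++ a :: t) ::ₘ D) a N v) :
    EntersVia ((p.reverse ++ a :: t) ::ₘ D) a (N.erase y) v := by
  obtain ⟨m, hm, hmv, hmN⟩ := hN
  have hnodup : (p ++ a :: t).Nodup := h.nodup _ (Multiset.mem_cons_self _ _)
  rcases traverses_cons.1 hm with rfl | hm | hm
  · rw [List.head?_append_of_ne_nil _ (by rintro rfl; simp at hy)] at hmv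
    exact absurd hmv hv
  · -- Traversed backwards, the rerouted path keeps its part before `a`, which avoids `y`.
    obtain rfl : m = t.reverse ++ a :: p.reverse := by
      rw [← List.reverse_inj, hm]; simp
    have hm_nodup : (t.reverse ++ a :: p.reverse).Nodup := by
      rw [← List.nodup_reverse, hm]; exact hnodup
    have hm_nodup' : (t.reverse ++ a :: p).Nodup :=
      (((List.reverse_perm p).cons a).append_left _).nodup_iff.1 hm_nodup
    refine ⟨t.reverse ++ a :: p, Or.inr (by simp), by simpa using hmv, fun z hz => ?_⟩
    rw [pair_infix_append_cons_iff hm_nodup'] at hz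
    refine Finset.mem_erase.2 ⟨?_, hmN z ((pair_infix_append_cons_iff hm_nodup).2 hz)⟩
    rintro rfl
    exact List.disjoint_of_nodup_append hm_nodup' (List.mem_of_getLast? hz)
      (List.mem_cons_of_mem a (List.mem_of_getLast? hy))
  · refine ⟨m, traverses_cons.2 (Or.inr (Or.inr hm)), hmv, fun z hz => ?_⟩
    refine Finset.mem_erase.2 ⟨?_, hmN z hz⟩
    rintro rfl
    exact Multiset.disjoint_left.1 (h.disjoint_listEdges_of_traverses hE hm)
      (mem_listEdges_of_infix ((pair_infix_append_cons_iff hnodup).2 hy))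
      (mem_listEdges_of_infix hz)

/-- `N` holds the ends that have not been used for a rerouting yet. -/
theorem exists_cons_of_entersVia {a b : V} {N : Finset V}
    (hD : IsPathDecomp E (b ::ₘ C) D) (hE : (s(b, a) ::ₘ E).Nodup) (hab : a ≠ b) (hbN : b ∉ N)
    (hN : ∀ v, v = b ∨ v ∈ N → EntersVia D a N v) :
    ∃ D', IsPathDecomp (s(b, a) ::ₘ E) (a ::ₘ C) D' := by
  classical
  induction N using Finset.strongInduction generalizing E b D with
  | _ N ih =>
  obtain ⟨l, hl, hlb, hlN⟩ := hN b (Or.inl rfl)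
  obtain ⟨D, hD, htrav⟩ := hD.exists_cons_of_traverses hl
  by_cases hal : a ∉ l
  · exact ⟨_, hD.prolong hlb hal⟩
  obtain ⟨p, t, rfl⟩ := List.append_of_mem (not_not.1 hal)
  have hnodup : (p ++ a :: t).Nodup := hD.nodup _ (Multiset.mem_cons_self _ _)
  have hp : p ≠ [] := by rintro rfl; simp [hab] at hlb
  have hpb : p.head? = some b := by rwa [List.head?_append_of_ne_nil _ hp] at hlb
  obtain ⟨y, hy⟩ : ∃ y, p.getLast? = some y := ⟨_, List.getLast?_eq_some_getLast hp⟩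
  have hya : [y, a] <:+: p ++ a :: t := (pair_infix_append_cons_iff hnodup).2 hy
  have hyN : y ∈ N := hlN y hya
  have hay : a ≠ y := by
    rintro rfl
    exact List.disjoint_of_nodup_append hnodup (List.mem_of_getLast? hy) (List.mem_cons_self ..)
  obtain ⟨E, rfl⟩ := Multiset.exists_cons_of_mem (hD.mem_edges
    (traverses_cons.2 (Or.inl rfl)) (mem_listEdges_of_infix hya))
  rw [Multiset.cons_swap] at hE ⊢
  refine ih (N.erase y) (Finset.erase_ssubset hyN) (hD.reroute hpb hy) hE hay
    (Finset.notMem_erase y N) fun v hv => ?_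
  have hvN : v ∈ N := hv.elim (fun h => h ▸ hyN) Finset.mem_of_mem_erase
  have hbv : p.head? ≠ some v := by
    rw [hpb]; rintro ⟨⟩; exact hbN hvN
  refine hD.entersVia_reroute (Multiset.nodup_cons.1 (Multiset.cons_swap .. ▸ hE)).2 hy hbv ?_
  obtain ⟨m, hm, h⟩ := hN v (Or.inr hvN)
  exact ⟨m, (htrav m).1 hm, h⟩

theorem exists_cons_of_forall_adj_mem_ends {a b : V}
    (hD : IsPathDecomp E (b ::ₘ C) D) (hE : (s(b, a) ::ₘ E).Nodup) (hab : a ≠ b)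
    (hC : ∀ v, s(v, a) ∈ E → v ∈ b ::ₘ C) :
    ∃ D', IsPathDecomp (s(b, a) ::ₘ E) (a ::ₘ C) D' := by
  classical
  refine hD.exists_cons_of_entersVia (N := C.toFinset.erase b) hE hab (Finset.notMem_erase b _) ?_
  intro v hv
  have hvC : v ∈ b ::ₘ C := by
    simp only [Finset.mem_erase, Multiset.mem_toFinset] at hv
    exact Multiset.mem_cons.2 (hv.imp_right And.right)
  obtain ⟨l, hl, hlv⟩ := hD.exists_traverses_of_mem_ends hvC
  refine ⟨l, hl, hlv, fun y hy => ?_⟩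
  have hayE : s(y, a) ∈ E := hD.mem_edges hl (mem_listEdges_of_infix hy)
  have hyb : y ≠ b := by rintro rfl; exact (Multiset.nodup_cons.1 hE).1 hayE
  rw [Finset.mem_erase, Multiset.mem_toFinset]
  exact ⟨hyb, (Multiset.mem_cons.1 (hC y hayE)).resolve_left hyb⟩

end IsPathDecomp

theorem exists_edge_forall_incident_mem {E : Multiset (Sym2 V)} {C : Multiset V} (hE : E ≠ 0)
    (hloop : ∀ e ∈ E, ¬ e.IsDiag)
    (hmiss : {v | (∃ e ∈ E, v ∈ e) ∧ v ∉ C}.Subsingleton) :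
    ∃ x y, s(x, y) ∈ E ∧ y ∈ C ∧ ∀ v, (∃ e ∈ E, v ∈ e) → v ∈ x ::ₘ C := by
  by_cases h : ∃ x, (∃ e ∈ E, x ∈ e) ∧ x ∉ C
  · obtain ⟨x, ⟨e, he, hxe⟩, hxC⟩ := h
    obtain ⟨y, rfl⟩ := Sym2.mem_iff_exists.1 hxe
    have hunique : ∀ v, (∃ e ∈ E, v ∈ e) → v ∉ C → v = x := fun v hv hvC =>
      hmiss ⟨hv, hvC⟩ ⟨⟨_, he, hxe⟩, hxC⟩
    refine ⟨x, y, he, ?_, fun v hv => ?_⟩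
    · by_contra hyC
      obtain rfl := hunique y ⟨_, he, Sym2.mem_mk_right x y⟩ hyC
      exact hloop _ he rfl
    · rw [Multiset.mem_cons, or_iff_not_imp_right]
      exact hunique v hv
  · push Not at h
    obtain ⟨⟨x, y⟩, he⟩ := Multiset.exists_mem_of_ne_zero hE
    exact ⟨x, y, he, h y ⟨_, he, Sym2.mem_mk_right x y⟩, fun v hv =>
      Multiset.mem_cons_of_mem (h v hv)⟩

section PrescribedEnds

variable [DecidableEq V]

theorem exists_isPathDecomp_zero {C : Multiset V} (hC : ∀ v, Even (C.count v)) :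
    ∃ D, IsPathDecomp 0 C D := by
  obtain ⟨B, rfl⟩ : Even C := by
    rw [← Multiset.toFinset_sum_count_nsmul_eq C]
    exact Finset.even_sum _ fun v _ => (hC v).nsmul_left _
  refine ⟨B.map fun v => [v], by simp, by simp [Multiset.bind_map], ?_⟩
  simpa [Multiset.bind_map, listEnds] using Multiset.bind_singleton B id

theorem even_count_add_countP_of_cons {E : Multiset (Sym2 V)} {C : Multiset V} {x y : V}
    (hxy : x ≠ y) (v : V)
    (h : Even ((y ::ₘ C).count v + (s(x, y) ::ₘ E).countP (v ∈ ·))) :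
    Even ((x ::ₘ C).count v + E.countP (v ∈ ·)) := by
  simp only [Multiset.count_cons, Multiset.countP_cons, Sym2.mem_iff] at h ⊢
  grind

theorem exists_isPathDecomp {E : Multiset (Sym2 V)} {C : Multiset V} (hE : E.Nodup)
    (hloop : ∀ e ∈ E, ¬ e.IsDiag) (hparity : ∀ v, Even (C.count v + E.countP (v ∈ ·)))
    (hmiss : {v | (∃ e ∈ E, v ∈ e) ∧ v ∉ C}.Subsingleton) :
    ∃ D, IsPathDecomp E C D := by
  induction hn : E.card generalizing E C with
  | zero =>
    obtain rfl := Multiset.card_eq_zero.1 hn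
    exact exists_isPathDecomp_zero (by simpa using hparity)
  | succ n ih =>
    obtain ⟨x, y, hxyE, hyC, hmem⟩ := exists_edge_forall_incident_mem
      (by rintro rfl; simp at hn) hloop hmiss
    obtain ⟨E, rfl⟩ := Multiset.exists_cons_of_mem hxyE
    obtain ⟨C, rfl⟩ := Multiset.exists_cons_of_mem hyC
    have hxy : x ≠ y := by rintro rfl; exact hloop _ hxyE rfl
    have hloop' : ∀ e ∈ E, ¬ e.IsDiag := fun e he => hloop e (Multiset.mem_cons_of_mem he)
    have hmem' : ∀ v, v ≠ y → (∃ e ∈ E, v ∈ e) → v ∈ x ::ₘ C := by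
      rintro v hvy ⟨e, he, hve⟩
      have hv := hmem v ⟨e, Multiset.mem_cons_of_mem he, hve⟩
      rw [Multiset.cons_swap] at hv
      exact (Multiset.mem_cons.1 hv).resolve_left hvy
    have hmiss' : {v | (∃ e ∈ E, v ∈ e) ∧ v ∉ x ::ₘ C}.Subsingleton :=
      Set.subsingleton_of_forall_eq y fun v hv => by_contra fun hvy => hv.2 (hmem' v hvy hv.1)
    obtain ⟨D, hD⟩ := ih (Multiset.nodup_cons.1 hE).2 hloop'
      (fun v => even_count_add_countP_of_cons hxy v (hparity v)) hmiss'
      (by simpa using hn)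
    refine hD.exists_cons_of_forall_adj_mem_ends hE hxy.symm fun v hv => ?_
    exact hmem' v (by rintro rfl; exact hloop' _ hv rfl) ⟨_, hv, Sym2.mem_mk_left v y⟩

end PrescribedEnds

section Walks

variable {G : SimpleGraph V}

theorem isChain_adj_of_listEdges_subset {l : List V} (h : ∀ e ∈ listEdges l, e ∈ G.edgeSet) :
    l.IsChain G.Adj := by
  rw [List.isChain_iff_forall_rel_of_append_cons_cons]
  rintro x y s t rfl
  exact h _ (mem_listEdges_of_infix ⟨s, t, by simp⟩)

theorem exists_isPath_of_listEdges_subset {l : List V} (hne : l ≠ []) (hl : l.Nodup)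
    (h : ∀ e ∈ listEdges l, e ∈ G.edgeSet) :
    ∃ (x y : V) (w : G.Walk x y), w.IsPath ∧ (w.edges : Multiset (Sym2 V)) = listEdges l := by
  have hsupport := Walk.support_ofSupport hne (isChain_adj_of_listEdges_subset h)
  refine ⟨_, _, _, Walk.IsPath.mk' (hsupport.symm ▸ hl), ?_⟩
  rw [Walk.edges_eq_zipWith_support, hsupport, listEdges]

theorem exists_paths_of_listEdges_subset (D : Multiset (List V)) (hD : ∀ l ∈ D, l.Nodup)
    (h : ∀ e ∈ D.bind listEdges, e ∈ G.edgeSet) :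
    ∃ L : List (Σ a b : V, G.Walk a b), (∀ p ∈ L, 0 < p.2.2.length) ∧
      (∀ p ∈ L, p.2.2.IsPath) ∧
      ((L.flatMap fun p => p.2.2.edges : List (Sym2 V)) : Multiset (Sym2 V)) =
        D.bind listEdges ∧
      2 * L.length ≤ (D.bind listEnds).card := by
  induction D using Multiset.induction_on with
  | empty => exact ⟨[], by simp⟩
  | cons l D ih =>
    simp only [Multiset.forall_mem_cons, Multiset.cons_bind, Multiset.mem_add, or_imp,
      forall_and] at hD h
    obtain ⟨L, hpos, hpath, hedges, hlength⟩ := ih hD.2 h.2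
    by_cases hl : listEdges l = 0
    · refine ⟨L, hpos, hpath, by rw [Multiset.cons_bind, hl, zero_add, hedges], ?_⟩
      rw [Multiset.cons_bind, Multiset.card_add]
      omega
    · have hne : l ≠ [] := by rintro rfl; exact hl rfl
      obtain ⟨x, y, w, hw, hwl⟩ := exists_isPath_of_listEdges_subset hne hD.1 h.1
      have hwpos : 0 < w.length := by
        rw [← Walk.length_edges, ← Multiset.coe_card, hwl]
        exact Multiset.card_pos.2 hl
      refine ⟨⟨x, y, w⟩ :: L, List.forall_mem_cons.2 ⟨hwpos, hpos⟩,
        List.forall_mem_cons.2 ⟨hw, hpath⟩, ?_, ?_⟩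
      · rw [List.flatMap_cons, ← Multiset.coe_add, hedges, hwl, Multiset.cons_bind]
      · rw [Multiset.cons_bind, Multiset.card_add, card_listEnds hne, List.length_cons]
        omega

theorem IsPathDecomp.two_mul_pn_le {E : Multiset (Sym2 V)} {C : Multiset V}
    {D : Multiset (List V)} (hD : IsPathDecomp E C D) (hE : E.Nodup)
    (hG : ∀ e, e ∈ E ↔ e ∈ G.edgeSet) : 2 * pn G ≤ C.card := by
  obtain ⟨L, hpos, hpath, hedges, hlength⟩ := exists_paths_of_listEdges_subset D hD.nodup
    fun e he => (hG e).1 (hD.edges ▸ he)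
  rw [hD.edges] at hedges
  rw [hD.ends] at hlength
  have hnodup : (L.flatMap fun p => p.2.2.edges).Nodup := by
    rwa [← Multiset.coe_nodup, hedges]
  let P : PathDecomp G :=
    { paths := L
      nontrivial := hpos
      isPath := hpath
      edgeDisjoint := (List.nodup_flatMap.1 hnodup).2.imp fun hd _ he he' => hd he he'
      covers := fun e he => by
        rw [← hG, ← hedges, Multiset.mem_coe] at he
        exact List.mem_flatMap.1 he }
  have hpn : pn G ≤ L.length := Nat.sInf_le ⟨P, rfl⟩
  omega

end Walks

theorem countP_mem_toFinset_edgeSet [DecidableEq V] {G : SimpleGraph V} (hG : G.edgeSet.Finite)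
    (v : V) : hG.toFinset.val.countP (v ∈ ·) = ndeg G v := by
  have hincidence : ((hG.toFinset.filter (v ∈ ·) : Finset (Sym2 V)) : Set (Sym2 V)) =
      G.incidenceSet v := by
    ext e; simp [incidenceSet]
  calc hG.toFinset.val.countP (v ∈ ·) = (G.incidenceSet v).ncard := by
        rw [← hincidence, Set.ncard_coe_finset, Multiset.countP_eq_card_filter]; rfl
    _ = ndeg G v := Nat.card_congr (G.incidenceSetEquivNeighborSet v)

theorem finite_setOf_odd_ndeg {G : SimpleGraph V} (hG : G.edgeSet.Finite) :
    {v | Odd (ndeg G v)}.Finite := by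
  classical
  refine (hG.toFinset.biUnion Sym2.toFinset).finite_toSet.subset fun v hv => ?_
  rw [Set.mem_ofPred_eq, ← countP_mem_toFinset_edgeSet hG] at hv
  obtain ⟨e, he, hve⟩ := Multiset.countP_pos.1 hv.pos
  exact Finset.mem_coe.2 (Finset.mem_biUnion.2 ⟨e, he, Sym2.mem_toFinset.2 hve⟩)

theorem lovasz_theorem_general (G : SimpleGraph V) (hG : G.edgeSet.Finite)
    (h : {v | 0 < ndeg G v ∧ Even (ndeg G v)}.Subsingleton) :
    pn G ≤ {v | Odd (ndeg G v)}.ncard / 2 := by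
  classical
  have hodd := finite_setOf_odd_ndeg hG
  have hparity (v : V) :
      Even (hodd.toFinset.val.count v + hG.toFinset.val.countP (v ∈ ·)) := by
    rw [countP_mem_toFinset_edgeSet, Multiset.count_eq_of_nodup hodd.toFinset.nodup]
    by_cases hv : Odd (ndeg G v) <;> simp [hv, Nat.even_add', Nat.not_odd_iff_even.1]
  have hmiss : {v | (∃ e ∈ hG.toFinset.val, v ∈ e) ∧ v ∉ hodd.toFinset.val}.Subsingleton := by
    convert h using 4 with v
    · rw [← countP_mem_toFinset_edgeSet hG, Multiset.countP_pos]
    · simp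
  obtain ⟨D, hD⟩ := exists_isPathDecomp hG.toFinset.nodup
    (fun e he => G.not_isDiag_of_mem_edgeSet (hG.mem_toFinset.1 he)) hparity hmiss
  have hpn := hD.two_mul_pn_le hG.toFinset.nodup fun e => hG.mem_toFinset
  rw [Finset.card_val, ← Set.ncard_eq_toFinset_card _ hodd] at hpn
  omega

theorem lovasz_theorem [Fintype V] (G : SimpleGraph V) (hconn : G.Connected)
    (h : {v : V | Even (ndeg G v)}.Subsingleton) :
    pn G ≤ Fintype.card V / 2 := by
  rw [← Nat.card_eq_fintype_card]
  exact (lovasz_theorem_general G (Set.toFinite _) (h.anti fun _ hv => hv.2)).trans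
    (Nat.div_le_div_right (Set.ncard_le_card _))
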